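/- Let Γ be a countable directed graph, F a potential and β ∈ ℝ, and assume there is a vertex v₀ with 0 < Σ_{n=0}^∞ A(β)^n_{v₀,v} < ∞ for all v ∈ Γ_V. Let X_β be the set of p ∈ P(Γ) such that for every v ∈ Γ_V the limit ψ_v = lim_{k→∞} K_β(v, s(p_k)) exists and the resulting vector ψ is a minimal A(β)-harmonic vector with ψ_{v₀} = 1. Then every e^{βF}-conformal measure m on P(Γ) with m(Z(v₀)) = 1 is concentrated on X_β, and for every v ∈ Γ_V one has lim_{k→∞} ∫_{Z(v₀)} K_β(v, s(p_k)) dm(p) = ∫_{Z(v₀)} lim_{k→∞} K_β(v, s(p_k)) dm(p) = m(Z(v)). -/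

import Mathlib

/-!
Write `G` for the Green function and `K` for the Martin kernel. The proof works directly on the
path space, with the decomposition of a path at its last visit to a finite set `D` of vertices.

*Last exits.* Conformality is a Markov property: `∫_{Z(v)} h ∘ σᵏ dm = ∑_w A(β)ᵏ_{v,w} ∫_{Z(w)} h dm`
(`conformal_iter`). Summing over the last visit to `D` gives, for shift invariant `f_w`,
`∫_{Z(v)} f_{last exit} dm = ∑_w G(v,w) ∫_{Z(w) ∩ NoRet D} f_w dm` (`last_exit`). As `G` is finite,
almost every path leaves every finite set (`ae_wandering`), hence the last exits from an
exhaustion by finite sets run to infinity along the path.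

*Convergence.* Since `G(v,w) = K(v,w) G(v₀,w)`, comparing the last exit formulas for `v` and `v₀`
from finite parts of a level set of `K(v, ·)` yields, for an invariant set `I` of paths with
`K(v, s(p_k)) > b` infinitely often, `b m(I ∩ Z(v₀)) ≤ m(I ∩ Z(v))`, and the opposite bound with
`a` when `K(v, s(p_k)) < a` infinitely often (`level_le`, `le_level`). For `a < b` both can hold
only on a null set, so `K(v, s(p_k))` converges almost everywhere (`ae_tendsto_kap`). The limit
`kap v` is bounded and invariant, and is the density of `m` on `Z(v)` with respect to `m` on
`Z(v₀)`, as far as invariant functions are concerned (`lintegral_mul_kap`). This gives the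
integral formulas, by dominated convergence, and harmonicity of `kap · p` for almost every `p`
(`ae_kap_harmonic`).

*Minimality.* On a finite set `D` a harmonic vector `φ` is the potential of its escape vector,
`φ v = ∑_w G(v,w) esc_D φ w` (`harmonic_eq_potential`), and `esc_D` is monotone. The integral over
`Z(v₀)` of `esc_D (kap · p) w` is the mass of `Z(w) ∩ NoRet D` (`lintegral_esc`); consequently
`spread D v p = ∑_w G(v₀,w) esc_D (kap · p) w |K(v,w) - kap v p|` has as integral that of
`|K(v, ·) - kap v|` at the last exit from `D`, which tends to `0` along an exhaustion. By Fatou the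
lower limit of the spreads vanishes almost everywhere (`ae_liminf_spread`). For harmonic
`φ ≤ kap · p` and `v, v₀ ∈ D` the difference of `φ v = ∑_w K(v,w) G(v₀,w) esc_D φ w` and
`kap v p * φ v₀ = ∑_w kap v p G(v₀,w) esc_D φ w` is at most the spread, so `φ = φ v₀ • kap · p`
(`kap_minimal`).
-/

open MeasureTheory Filter Topology
open scoped ENNReal NNReal

namespace GraphKMS

variable {V A : Type}

/-- The space `P(Γ)` of infinite paths of a directed graph with vertex set `V`,
arrow set `A`, source map `s` and range map `r`. -/
structure PathSpace (s r : A → V) : Type where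
  seq : ℕ → A
  compat : ∀ i, r (seq i) = s (seq (i + 1))

/-- The Borel σ-algebra of `P(Γ)`, i.e. the trace on `P(Γ)` of the Borel σ-algebra of the
product `A^ℕ` with `A` discrete. -/
instance (s r : A → V) : MeasurableSpace (PathSpace s r) :=
  MeasurableSpace.comap (fun p => p.seq) (@MeasurableSpace.pi ℕ (fun _ => A) (fun _ => ⊤))

/-- The shift map `σ`. -/
def shift (s r : A → V) (p : PathSpace s r) : PathSpace s r :=
  ⟨fun i => p.seq (i + 1), fun i => p.compat (i + 1)⟩

/-- The cylinder set `Z(v)` of a vertex. -/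
def cylV (s r : A → V) (v : V) : Set (PathSpace s r) := {p | s (p.seq 0) = v}

/-- The cylinder set `Z(a)` of an arrow. -/
def cylA (s r : A → V) (a : A) : Set (PathSpace s r) := {p | p.seq 0 = a}

/-- A finite path: a source vertex together with a compatible list of arrows.
The empty list corresponds to the path of length `0` given by the vertex `src`. -/
structure FinPath (s r : A → V) : Type where
  src : V
  arrows : List A
  head_src : ∀ h : arrows ≠ [], s (arrows.head h) = src
  chain : arrows.Chain' (fun a b => r a = s b)

/-- The range `r(μ)` of a finite path. -/
def finRng (s r : A → V) (μ : FinPath s r) : V :=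
  match μ.arrows.getLast? with
  | none => μ.src
  | some a => r a

/-- The additive extension `F(μ)` of a potential to finite paths. -/
def finWt (s r : A → V) (F : A → ℝ) (μ : FinPath s r) : ℝ := (μ.arrows.map F).sum

/-- The cylinder set `Z(μ)` of a finite path. -/
def finCyl (s r : A → V) (μ : FinPath s r) : Set (PathSpace s r) :=
  {p | s (p.seq 0) = μ.src ∧ ∀ i : Fin μ.arrows.length, p.seq i.1 = μ.arrows.get i}

/-- The set of vertices occurring in a finite path. -/
def finVerts (s r : A → V) (μ : FinPath s r) : Set V :=
  {μ.src} ∪ {v | ∃ a ∈ μ.arrows, s a = v ∨ r a = v}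

/-- The entries of the matrix `A(β)`. -/
noncomputable def Amat (s r : A → V) (F : A → ℝ) (β : ℝ) (v w : V) : ℝ≥0∞ :=
  ∑' a : {a : A // s a = v ∧ r a = w}, ENNReal.ofReal (Real.exp (-(β * F a.1)))

/-- Powers of a `[0,∞]`-valued matrix. -/
noncomputable def matPow (M : V → V → ℝ≥0∞) : ℕ → V → V → ℝ≥0∞
  | 0 => fun v w => ({v} : Set V).indicator (fun _ => (1 : ℝ≥0∞)) w
  | n + 1 => fun v w => ∑' u : V, M v u * matPow M n u w

/-- The entries of `A(β)ⁿ`. -/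
noncomputable def Apow (s r : A → V) (F : A → ℝ) (β : ℝ) (n : ℕ) (v w : V) : ℝ≥0∞ :=
  matPow (Amat s r F β) n v w

/-- The Green function `Σₙ A(β)ⁿ_{v,w}`. -/
noncomputable def Green (s r : A → V) (F : A → ℝ) (β : ℝ) (v w : V) : ℝ≥0∞ :=
  ∑' n : ℕ, Apow s r F β n v w

/-- The Martin kernel `K_β(v,w)` with base point `v₀`. -/
noncomputable def MartinK (s r : A → V) (F : A → ℝ) (β : ℝ) (v₀ v w : V) : ℝ≥0∞ :=
  Green s r F β v w / Green s r F β v₀ w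

/-- A harmonic vector for a `[0,∞]`-valued matrix: a nonzero, finite-valued,
nonnegative vector fixed by the matrix. -/
def IsHarmonic (M : V → V → ℝ≥0∞) (ψ : V → ℝ≥0∞) : Prop :=
  ψ ≠ 0 ∧ (∀ v, ψ v ≠ ∞) ∧ ∀ v, (∑' w : V, M v w * ψ w) = ψ v

/-- A minimal harmonic vector. -/
def IsMinimalHarmonic (M : V → V → ℝ≥0∞) (ψ : V → ℝ≥0∞) : Prop :=
  IsHarmonic M ψ ∧ ∀ φ : V → ℝ≥0∞, IsHarmonic M φ → (∀ v, φ v ≤ ψ v) →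
    ∃ c : ℝ≥0, 0 < c ∧ ∀ v, φ v = (c : ℝ≥0∞) * ψ v

/-- An `e^{βF}`-conformal measure: a nonzero Borel measure which is finite on the
cylinders of vertices and satisfies `m(σ(B ∩ Z(a))) = e^{βF(a)} m(B ∩ Z(a))`. -/
def Conformal (s r : A → V) (F : A → ℝ) (β : ℝ) (m : Measure (PathSpace s r)) : Prop :=
  m ≠ 0 ∧ (∀ v : V, m (cylV s r v) ≠ ∞) ∧
    ∀ (a : A) (B : Set (PathSpace s r)), MeasurableSet B →
      m (shift s r '' (B ∩ cylA s r a)) =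
        ENNReal.ofReal (Real.exp (β * F a)) * m (B ∩ cylA s r a)

/-- An extremal conformal measure: every conformal measure dominated by it is a
positive scalar multiple of it. -/
def ExtremalConformal (s r : A → V) (F : A → ℝ) (β : ℝ) (m : Measure (PathSpace s r)) : Prop :=
  Conformal s r F β m ∧ ∀ m' : Measure (PathSpace s r), Conformal s r F β m' →
    (∀ B : Set (PathSpace s r), MeasurableSet B → m' B ≤ m B) →
    ∃ c : ℝ≥0, 0 < c ∧ m' = (c : ℝ≥0∞) • m

/-- A wandering path: its vertices leave every finite set of vertices. -/
def Wandering (s r : A → V) (p : PathSpace s r) : Prop :=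
  ∀ F₀ : Finset V, ∃ N : ℕ, ∀ i, N ≤ i → s (p.seq i) ∉ F₀

/-- A ray: an infinite path with pairwise distinct vertices. -/
def IsRay (s r : A → V) (p : PathSpace s r) : Prop :=
  Function.Injective fun i => s (p.seq i)

/-- The relation `p → q` between (wandering) paths. -/
def Leads (s r : A → V) (p q : PathSpace s r) : Prop :=
  ∀ (F₀ : Finset V) (N : ℕ), ∃ n₁ n₂ : ℕ, N ≤ n₁ ∧ N ≤ n₂ ∧
    ∃ μ : FinPath s r, μ.src = s (p.seq n₁) ∧ finRng s r μ = s (q.seq n₂) ∧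
      ∀ v ∈ finVerts s r μ, v ∉ F₀

/-- Nonempty path lists from `v` to `w`. -/
def IsPathList (s r : A → V) (l : List A) (v w : V) : Prop :=
  l ≠ [] ∧ l.Chain' (fun a b => r a = s b) ∧
    (∀ h : l ≠ [], s (l.head h) = v) ∧ ∀ h : l ≠ [], r (l.getLast h) = w

/-- The set `L_j(y)` (zero-indexed in `j`). -/
def Lset (s r : A → V) (p : PathSpace s r) (j : ℕ) : Set (List A) :=
  {l | IsPathList s r l (s (p.seq j)) (s (p.seq (j + 1))) ∧
    ∀ a ∈ l, ∀ i ≤ j, r a ≠ s (p.seq i)}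

/-- The sum `Σ_{μ ∈ L_j(y)} e^{-βF(μ)}`. -/
noncomputable def LSum (s r : A → V) (F : A → ℝ) (β : ℝ) (p : PathSpace s r) (j : ℕ) : ℝ≥0∞ :=
  ∑' l : Lset s r p j, ENNReal.ofReal (Real.exp (-(β * (l.1.map F).sum)))

/-- The product `𝕎(y[1,k+1[)` (zero-indexed: the product of the first `k` level sums). -/
noncomputable def Wprod (s r : A → V) (F : A → ℝ) (β : ℝ) (p : PathSpace s r) (k : ℕ) : ℝ≥0∞ :=
  ∏ j ∈ Finset.range k, LSum s r F β p j

/-- `𝕍_β(v,y)`: the limit of the nondecreasing sequence of quotients. -/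
noncomputable def Vbeta (s r : A → V) (F : A → ℝ) (β : ℝ) (v : V) (p : PathSpace s r) : ℝ≥0∞ :=
  Filter.limsup (fun k => Green s r F β v (s (p.seq k)) / Wprod s r F β p k) Filter.atTop

/-- `B_k(y)` (zero-indexed in `k`). -/
def Bset (s r : A → V) (p : PathSpace s r) (k : ℕ) : Set (PathSpace s r) :=
  {x | s (x.seq 0) = s (p.seq k) ∧ ∀ i, 1 ≤ i → ∀ j ≤ k, s (x.seq i) ≠ s (p.seq j)}

/-- `𝔹_k(y)` (zero-indexed in `k`). -/
def BBset (s r : A → V) (p : PathSpace s r) (k : ℕ) : Set (PathSpace s r) :=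
  Bset s r p k ∩ ⋂ (j : ℕ) (_ : k + 1 ≤ j), ⋃ i : ℕ, (shift s r)^[i] ⁻¹' Bset s r p j

/-- `𝔹(y)`. -/
def BB (s r : A → V) (p : PathSpace s r) : Set (PathSpace s r) :=
  ⋃ (n : ℕ) (k : ℕ), (shift s r)^[n] ⁻¹' ((shift s r)^[k] '' BBset s r p 0)

/-- A simple path from `v` to `w`: no arrow except possibly the last one has range `w`. -/
def IsSimplePath (s r : A → V) (v w : V) (l : List A) : Prop :=
  IsPathList s r l v w ∧ ∀ a ∈ l.dropLast, r a ≠ w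

/-- `R_{βF}(v,w)`: the sum of `e^{-βF(ν)}` over all simple paths `ν` from `v` to `w`. -/
noncomputable def Rsum (s r : A → V) (F : A → ℝ) (β : ℝ) (v w : V) : ℝ≥0∞ :=
  ∑' l : {l : List A // IsSimplePath s r v w l},
    ENNReal.ofReal (Real.exp (-(β * (l.1.map F).sum)))

open Classical in
/-- The restriction of a matrix to a subset of the index set (extended by `0`). -/
noncomputable def restrMat (M : V → V → ℝ≥0∞) (S : Set V) (v w : V) : ℝ≥0∞ :=
  if v ∈ S ∧ w ∈ S then M v w else 0

/-- A loop: a nonempty path list whose range equals its source. -/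
def IsLoop (s r : A → V) (l : List A) : Prop :=
  l ≠ [] ∧ l.Chain' (fun a b => r a = s b) ∧
    ∀ h : l ≠ [], r (l.getLast h) = s (l.head h)

/-! ### Measurability and the shift -/

section Basic

variable {s r : A → V}

lemma measurable_seq {E : Type*} [MeasurableSpace E] (f : A → E) (k : ℕ) :
    Measurable fun p : PathSpace s r => f (p.seq k) := by
  let _ : MeasurableSpace A := ⊤
  have h1 : Measurable (fun p : PathSpace s r => p.seq) := comap_measurable _
  exact (measurable_from_top (f := f)).comp ((measurable_pi_apply k).comp h1)

lemma measurable_shift : Measurable (shift s r) := by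
  let _ : MeasurableSpace A := ⊤
  refine measurable_comap_iff.2 (measurable_pi_iff.2 fun i => ?_)
  exact measurable_seq (s := s) (r := r) (fun a => a) (i + 1)

lemma iterate_shift_seq (k : ℕ) (p : PathSpace s r) (i : ℕ) :
    ((shift s r)^[k] p).seq i = p.seq (i + k) := by
  induction k generalizing p with
  | zero => rfl
  | succ k ih =>
    rw [Function.iterate_succ_apply, ih]
    simp only [shift]
    congr 1

lemma measurableSet_seq (S : Set V) (k : ℕ) :
    MeasurableSet {p : PathSpace s r | s (p.seq k) ∈ S} := by
  let _ : MeasurableSpace V := ⊤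
  exact measurable_seq (s := s) (r := r) s k (t := S) trivial

lemma measurableSet_cylV (v : V) : MeasurableSet (cylV s r v) :=
  measurableSet_seq {v} 0

lemma measurableSet_cylA (a : A) : MeasurableSet (cylA s r a) := by
  let _ : MeasurableSpace A := ⊤
  exact measurable_seq (s := s) (r := r) (fun a => a) 0 (t := {a}) trivial

/-- Prepending an arrow `a` to a path starting at `r(a)` inverts the shift on `Z(a)`. -/
lemma shift_image (a : A) (B : Set (PathSpace s r)) :
    shift s r '' (shift s r ⁻¹' B ∩ cylA s r a) = B ∩ cylV s r (r a) := by
  ext q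
  constructor
  · rintro ⟨p, ⟨hp, hpa⟩, rfl⟩
    refine ⟨hp, ?_⟩
    have := p.compat 0
    rw [show p.seq 0 = a from hpa] at this
    exact this.symm
  · rintro ⟨hq, hqv⟩
    let p : PathSpace s r := ⟨fun i => Nat.casesOn i a q.seq, fun i => by
      cases i with
      | zero => exact (show s (q.seq 0) = r a from hqv).symm
      | succ i => exact q.compat i⟩
    exact ⟨p, ⟨hq, show p.seq 0 = a from rfl⟩, rfl⟩

end Basic

/-! ### The Markov property of conformal measures -/

section Conformal

variable {s r : A → V} {F : A → ℝ} {β : ℝ}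
  {m : Measure (PathSpace s r)}

lemma conformal_arrow (hm : Conformal s r F β m) (a : A) {B : Set (PathSpace s r)}
    (hB : MeasurableSet B) :
    m (shift s r ⁻¹' B ∩ cylA s r a) =
      ENNReal.ofReal (Real.exp (-(β * F a))) * m (B ∩ cylV s r (r a)) := by
  have h := hm.2.2 a _ (measurable_shift hB)
  rw [shift_image] at h
  rw [h, ← mul_assoc, ← ENNReal.ofReal_mul (Real.exp_pos _).le, ← Real.exp_add]
  simp

open Classical in
lemma Amat_eq (v w : V) : Amat s r F β v w =
    ∑' a : A, if s a = v ∧ r a = w then ENNReal.ofReal (Real.exp (-(β * F a))) else 0 := by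
  unfold Amat
  refine (tsum_subtype {a : A | s a = v ∧ r a = w}
    (fun a => ENNReal.ofReal (Real.exp (-(β * F a))))).trans ?_
  simp [Set.indicator_apply]

open Classical in
lemma conformal_set [Countable A] (hm : Conformal s r F β m) (v : V) {B : Set (PathSpace s r)}
    (hB : MeasurableSet B) :
    m (shift s r ⁻¹' B ∩ cylV s r v) = ∑' w, Amat s r F β v w * m (B ∩ cylV s r w) := by
  have h1 : shift s r ⁻¹' B ∩ cylV s r v =
      ⋃ a : A, (shift s r ⁻¹' B ∩ cylA s r a) ∩ {p | s a = v} := by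
    ext p
    simp only [cylV, cylA, Set.mem_inter_iff, Set.mem_ofPred_eq, Set.mem_iUnion]
    constructor
    · rintro ⟨h, h'⟩
      exact ⟨_, ⟨h, rfl⟩, h'⟩
    · rintro ⟨a, ⟨h, rfl⟩, h'⟩
      exact ⟨h, h'⟩
  have hd : Pairwise (Function.onFun Disjoint fun a : A =>
      (shift s r ⁻¹' B ∩ cylA s r a) ∩ {p | s a = v}) := by
    intro a b hab
    refine Set.disjoint_left.2 ?_
    rintro p ⟨⟨-, h1⟩, -⟩ ⟨⟨-, h2⟩, -⟩
    exact hab (h1.symm.trans h2)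
  rw [h1, measure_iUnion hd fun a =>
    ((measurable_shift hB).inter (measurableSet_cylA a)).inter (MeasurableSet.const _)]
  simp_rw [Amat_eq, ← ENNReal.tsum_mul_right]
  rw [ENNReal.tsum_comm]
  refine tsum_congr fun a => ?_
  rw [tsum_eq_single (r a)]
  · by_cases h : s a = v
    · simp [h, conformal_arrow hm a hB]
    · simp [h]
  · intro w hw
    simp [hw.symm]

/-- One step of the Markov property of a conformal measure. -/
lemma conformal_one [Countable V] [Countable A] (hm : Conformal s r F β m) (v : V)
    {h : PathSpace s r → ℝ≥0∞} (hh : Measurable h) :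
    ∫⁻ p in cylV s r v, h (shift s r p) ∂m =
      ∑' w, Amat s r F β v w * ∫⁻ p in cylV s r w, h p ∂m := by
  have key : (m.restrict (cylV s r v)).map (shift s r) =
      Measure.sum fun w => Amat s r F β v w • m.restrict (cylV s r w) := by
    ext B hB
    rw [Measure.map_apply measurable_shift hB, Measure.restrict_apply (measurable_shift hB),
      conformal_set hm v hB, Measure.sum_apply _ hB]
    simp [Measure.restrict_apply hB]
  rw [← lintegral_map hh measurable_shift, key, lintegral_sum_measure]
  simp

lemma Apow_zero (v w : V) [Decidable (v = w)] :
    Apow s r F β 0 v w = if v = w then 1 else 0 := by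
  by_cases h : v = w <;> simp [Apow, matPow, h, Ne.symm]

lemma Apow_succ (n : ℕ) (v w : V) :
    Apow s r F β (n + 1) v w = ∑' u, Amat s r F β v u * Apow s r F β n u w := rfl

lemma conformal_iter [Countable V] [Countable A] (hm : Conformal s r F β m)
    {h : PathSpace s r → ℝ≥0∞} (hh : Measurable h) (k : ℕ) (v : V) :
    ∫⁻ p in cylV s r v, h ((shift s r)^[k] p) ∂m =
      ∑' w, Apow s r F β k v w * ∫⁻ p in cylV s r w, h p ∂m := by
  classical
  induction k generalizing v with
  | zero =>
    rw [tsum_eq_single v]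
    · simp [Apow_zero]
    · intro w hw
      simp [Apow_zero, hw.symm]
  | succ k ih =>
    simp_rw [Function.iterate_succ_apply]
    rw [conformal_one hm v (h := fun p => h ((shift s r)^[k] p))
      (hh.comp (measurable_shift.iterate k))]
    simp_rw [ih, Apow_succ, ← ENNReal.tsum_mul_right, ← ENNReal.tsum_mul_left]
    rw [ENNReal.tsum_comm]
    simp_rw [mul_assoc]

/-- Summing the Markov property over all times yields the Green function. -/
lemma conformal_green [Countable V] [Countable A] (hm : Conformal s r F β m)
    {h : PathSpace s r → ℝ≥0∞} (hh : Measurable h) (v : V) :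
    ∫⁻ p in cylV s r v, ∑' k, h ((shift s r)^[k] p) ∂m =
      ∑' w, Green s r F β v w * ∫⁻ p in cylV s r w, h p ∂m := by
  rw [lintegral_tsum (f := fun k p => h ((shift s r)^[k] p))
    fun k => (hh.comp (measurable_shift.iterate k)).aemeasurable]
  simp_rw [conformal_iter hm hh, Green, ← ENNReal.tsum_mul_right]
  rw [ENNReal.tsum_comm]

end Conformal

/-! ### The Green function and the Martin kernel -/

section Kernel

variable {s r : A → V} {F : A → ℝ} {β : ℝ} {v₀ : V}

lemma Apow_mul_le (n k : ℕ) (x v w : V) :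
    Apow s r F β n x v * Apow s r F β k v w ≤ Apow s r F β (n + k) x w := by
  classical
  induction n generalizing x with
  | zero =>
    by_cases h : x = v <;> simp [Apow_zero, h]
  | succ n ih =>
    rw [Nat.succ_add, Apow_succ, Apow_succ, ← ENNReal.tsum_mul_right]
    refine ENNReal.tsum_le_tsum fun u => ?_
    rw [mul_assoc]
    exact mul_le_mul_right (ih u) _

lemma Apow_le_green (n : ℕ) (v w : V) : Apow s r F β n v w ≤ Green s r F β v w :=
  ENNReal.le_tsum (f := fun n => Apow s r F β n v w) n

lemma Apow_mul_green_le (n : ℕ) (x v w : V) :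
    Apow s r F β n x v * Green s r F β v w ≤ Green s r F β x w := by
  unfold Green
  rw [← ENNReal.tsum_mul_left]
  refine (ENNReal.tsum_le_tsum fun k => Apow_mul_le n k x v w).trans ?_
  exact ENNReal.tsum_comp_le_tsum_of_injective (add_right_injective n)
    (fun k => Apow s r F β k x w)


lemma exists_Apow_ne_zero
    (hv₀ : ∀ v : V, Green s r F β v₀ v ≠ 0 ∧ Green s r F β v₀ v ≠ ∞)
    (v : V) : ∃ n, Apow s r F β n v₀ v ≠ 0 := by
  by_contra! h
  exact (hv₀ v).1 (by simp [Green, h])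

/-- The Martin kernel `K(v, ·)` is bounded, by the inverse of any nonzero entry
`A(β)ⁿ_{v₀,v}`. -/
lemma martinK_bounded
    (hv₀ : ∀ v : V, Green s r F β v₀ v ≠ 0 ∧ Green s r F β v₀ v ≠ ∞)
    (v : V) :
    ∃ C : ℝ≥0∞, C ≠ ∞ ∧ ∀ w, MartinK s r F β v₀ v w ≤ C := by
  obtain ⟨n, hn⟩ := exists_Apow_ne_zero hv₀ v
  have hn' : Apow s r F β n v₀ v ≠ ∞ :=
    ne_top_of_le_ne_top (hv₀ v).2 (Apow_le_green n v₀ v)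
  refine ⟨(Apow s r F β n v₀ v)⁻¹, ENNReal.inv_ne_top.2 hn, fun w => ?_⟩
  refine ENNReal.div_le_of_le_mul ?_
  rw [← ENNReal.mul_le_iff_le_inv hn hn']
  exact Apow_mul_green_le n v₀ v w

lemma martinK_mul
    (hv₀ : ∀ v : V, Green s r F β v₀ v ≠ 0 ∧ Green s r F β v₀ v ≠ ∞)
    (v w : V) :
    MartinK s r F β v₀ v w * Green s r F β v₀ w = Green s r F β v w :=
  ENNReal.div_mul_cancel (hv₀ w).1 (hv₀ w).2

lemma green_ne_top
    (hv₀ : ∀ v : V, Green s r F β v₀ v ≠ 0 ∧ Green s r F β v₀ v ≠ ∞)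
    (v w : V) : Green s r F β v w ≠ ∞ := by
  obtain ⟨C, hC, h⟩ := martinK_bounded hv₀ v
  rw [← martinK_mul hv₀ v w]
  exact ENNReal.mul_ne_top (ne_top_of_le_ne_top hC (h w)) (hv₀ w).2

lemma martinK_self
    (hv₀ : ∀ v : V, Green s r F β v₀ v ≠ 0 ∧ Green s r F β v₀ v ≠ ∞)
    (w : V) : MartinK s r F β v₀ v₀ w = 1 :=
  ENNReal.div_self (hv₀ w).1 (hv₀ w).2

end Kernel

/-! ### Last exits from a set of vertices -/

section LastExit

variable {s r : A → V}

variable (s r) in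
/-- The paths that start in `D` and never return to `D`. -/
def NoRet (D : Set V) : Set (PathSpace s r) :=
  {q | s (q.seq 0) ∈ D ∧ ∀ i, s (q.seq (i + 1)) ∉ D}

variable (s r) in
open Classical in
/-- The value `c k` at the time `k` of the last visit of `p` to `D`, and `0` when there is
no last visit. At most one summand is nonzero. -/
noncomputable def exitSum (D : Set V) (c : ℕ → ℝ≥0∞) (p : PathSpace s r) : ℝ≥0∞ :=
  ∑' k, if (shift s r)^[k] p ∈ NoRet s r D then c k else 0

lemma mem_noRet_iterate {D : Set V} {p : PathSpace s r} {k : ℕ} :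
    (shift s r)^[k] p ∈ NoRet s r D ↔ s (p.seq k) ∈ D ∧ ∀ i, k < i → s (p.seq i) ∉ D := by
  simp only [NoRet, Set.mem_ofPred_eq, iterate_shift_seq, zero_add]
  refine and_congr_right fun _ => ⟨fun h i hi => ?_, fun h i => h _ (by omega)⟩
  have := h (i - k - 1)
  rwa [show i - k - 1 + 1 + k = i by omega] at this

lemma exitSum_of_mem {D : Set V} {p : PathSpace s r} {k : ℕ}
    (hk : (shift s r)^[k] p ∈ NoRet s r D) (c : ℕ → ℝ≥0∞) : exitSum s r D c p = c k := by
  unfold exitSum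
  rw [tsum_eq_single k]
  · simp [hk]
  · intro l hl
    refine if_neg fun h => ?_
    rw [mem_noRet_iterate] at h hk
    rcases lt_or_gt_of_ne hl with h1 | h1
    · exact h.2 _ h1 hk.1
    · exact hk.2 _ h1 h.1

lemma exitSum_le {D : Set V} {p : PathSpace s r} {c : ℕ → ℝ≥0∞} {C : ℝ≥0∞}
    (hc : ∀ k, c k ≤ C) : exitSum s r D c p ≤ C := by
  by_cases h : ∃ k, (shift s r)^[k] p ∈ NoRet s r D
  · obtain ⟨k, hk⟩ := h
    rw [exitSum_of_mem hk]
    exact hc k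
  · push Not at h
    simp [exitSum, h]

lemma exists_last_exit {D : Set V} (hD : D.Finite) {p : PathSpace s r}
    (hp : Wandering s r p) {j : ℕ} (hj : s (p.seq j) ∈ D) :
    ∃ k, j ≤ k ∧ (shift s r)^[k] p ∈ NoRet s r D := by
  classical
  obtain ⟨N, hN⟩ := hp hD.toFinset
  simp only [Set.Finite.mem_toFinset] at hN
  have hjN : j ≤ N := by
    by_contra! h
    exact hN j h.le hj
  refine ⟨Nat.findGreatest (fun i => s (p.seq i) ∈ D) N, Nat.le_findGreatest hjN hj, ?_⟩
  rw [mem_noRet_iterate]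
  refine ⟨Nat.findGreatest_spec (P := fun i => s (p.seq i) ∈ D) hjN hj, fun i hi => ?_⟩
  rcases le_total i N with h | h
  · exact Nat.findGreatest_is_greatest hi h
  · exact hN i h

/-- If a wandering path meets the union of an increasing sequence of finite sets infinitely
often, then its last exit times tend to infinity, so that the last exit values have the same
limit as the sequence itself. -/
lemma exitSum_tendsto {D : ℕ → Set V} (hDf : ∀ N, (D N).Finite) (hDm : Monotone D)
    {p : PathSpace s r} (hp : Wandering s r p)
    (hDu : ∀ j, ∃ i, j ≤ i ∧ ∃ N, s (p.seq i) ∈ D N)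
    {c : ℕ → ℝ≥0∞} {L : ℝ≥0∞} (hc : Tendsto c atTop (𝓝 L)) :
    Tendsto (fun N => exitSum s r (D N) c p) atTop (𝓝 L) := by
  intro U hU
  obtain ⟨j, hj⟩ := eventually_atTop.1 (hc hU)
  obtain ⟨i, hji, N₀, hN₀⟩ := hDu j
  refine eventually_atTop.2 ⟨N₀, fun N hN => ?_⟩
  obtain ⟨k, hk, hk'⟩ := exists_last_exit (hDf N) hp (hDm hN hN₀)
  simp only [exitSum_of_mem hk']
  exact hj k (hji.trans hk)

lemma measurableSet_noRet (D : Set V) : MeasurableSet (NoRet s r D) := by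
  have : NoRet s r D = {q | s (q.seq 0) ∈ D} ∩ ⋂ i, {q | s (q.seq (i + 1)) ∈ Dᶜ} := by
    ext q; simp [NoRet]
  rw [this]
  exact (measurableSet_seq D 0).inter (MeasurableSet.iInter fun i => measurableSet_seq _ _)

lemma measurable_family [Countable V] {f : V → PathSpace s r → ℝ≥0∞}
    (hf : ∀ w, Measurable (f w)) (k : ℕ) : Measurable fun p => f (s (p.seq k)) p := by
  let _ : MeasurableSpace V := ⊤
  have h : Measurable fun x : V × PathSpace s r => f x.1 x.2 :=
    measurable_from_prod_countable_right hf
  exact h.comp ((measurable_seq s k).prodMk measurable_id)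

lemma measurable_exitSum [Countable V] {f : V → PathSpace s r → ℝ≥0∞}
    (hf : ∀ w, Measurable (f w)) (D : Set V) :
    Measurable fun p => exitSum s r D (fun k => f (s (p.seq k)) p) p := by
  refine Measurable.tsum fun k => ?_
  exact Measurable.ite (measurable_shift.iterate k (measurableSet_noRet D))
    (measurable_family hf k) measurable_const

lemma invariant_iterate {E : Type*} {f : PathSpace s r → E} (hf : ∀ p, f (shift s r p) = f p)
    (k : ℕ) (p : PathSpace s r) : f ((shift s r)^[k] p) = f p := by
  induction k generalizing p with
  | zero => rfl
  | succ k ih => rw [Function.iterate_succ_apply, ih, hf]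

/-- The last exit decomposition: integrating over `Z(v)` the value at the last exit from `D`
of a family of invariant functions indexed by the vertices. -/
lemma last_exit [Countable V] [Countable A] {F : A → ℝ} {β : ℝ}
    {m : Measure (PathSpace s r)} (hm : Conformal s r F β m)
    {f : V → PathSpace s r → ℝ≥0∞} (hf : ∀ w, Measurable (f w))
    (hfi : ∀ w p, f w (shift s r p) = f w p) (D : Set V) (v : V) :
    ∫⁻ p in cylV s r v, exitSum s r D (fun k => f (s (p.seq k)) p) p ∂m =
      ∑' w, Green s r F β v w *
        ∫⁻ p in cylV s r w, (NoRet s r D).indicator (f w) p ∂m := by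
  classical
  have hh : Measurable ((NoRet s r D).indicator fun q => f (s (q.seq 0)) q) :=
    (measurable_family hf 0).indicator (measurableSet_noRet D)
  have h := conformal_green hm hh v
  have e1 : ∀ p, ∑' k, (NoRet s r D).indicator (fun q => f (s (q.seq 0)) q)
      ((shift s r)^[k] p) = exitSum s r D (fun k => f (s (p.seq k)) p) p := by
    intro p
    refine tsum_congr fun k => ?_
    rw [Set.indicator_apply, iterate_shift_seq, zero_add, invariant_iterate (hfi _)]
  simp_rw [e1] at h
  rw [h]
  refine tsum_congr fun w => ?_
  congr 1
  refine setLIntegral_congr_fun (measurableSet_cylV w) fun q hq => ?_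
  have hq' : s (q.seq 0) = w := hq
  simp [Set.indicator_apply, hq']

lemma noRet_integral_eq_zero {m : Measure (PathSpace s r)} {D : Set V} {w : V}
    (hw : w ∉ D)
    (f : PathSpace s r → ℝ≥0∞) :
    ∫⁻ p in cylV s r w, (NoRet s r D).indicator f p ∂m = 0 := by
  rw [setLIntegral_congr_fun (measurableSet_cylV w) (g := fun _ => 0), lintegral_zero]
  intro p hp
  refine Set.indicator_of_notMem (fun h => hw ?_) _
  rw [← show s (p.seq 0) = w from hp]
  exact h.1

end LastExit

/-! ### Exhaustions and invariant sets -/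

lemma exists_exhaustion (V : Type) [Countable V] :
    ∃ D : ℕ → Set V, (∀ N, (D N).Finite) ∧ Monotone D ∧ ∀ v, ∃ N, v ∈ D N := by
  obtain ⟨e, he⟩ := exists_injective_nat V
  refine ⟨fun N => e ⁻¹' Set.Iio N, fun N => (Set.finite_Iio N).preimage he.injOn,
    fun M N hMN => Set.preimage_mono (Set.Iio_subset_Iio hMN), fun v => ⟨e v + 1, ?_⟩⟩
  simp

lemma indicator_invariant {s r : A → V} {B : Set (PathSpace s r)}
    (hB : ∀ p, shift s r p ∈ B ↔ p ∈ B) (p : PathSpace s r) :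
    B.indicator (1 : PathSpace s r → ℝ≥0∞) (shift s r p) = B.indicator 1 p := by
  by_cases h : p ∈ B
  · rw [Set.indicator_of_mem h, Set.indicator_of_mem ((hB p).2 h)]
    rfl
  · rw [Set.indicator_of_notMem h, Set.indicator_of_notMem fun h' => h ((hB p).1 h')]

/-! ### Wandering paths and level estimates -/

section Convergence

variable [Countable V] [Countable A] {s r : A → V} {F : A → ℝ} {β : ℝ} {v₀ : V}
  {m : Measure (PathSpace s r)}

lemma ae_of_forall_cylV {P : PathSpace s r → Prop}
    (h : ∀ v, ∀ᵐ p ∂(m.restrict (cylV s r v)), P p) : ∀ᵐ p ∂m, P p := by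
  have hu : ⋃ v, cylV s r v = Set.univ := by
    ext p; simp [cylV]
  rw [← Measure.restrict_univ (μ := m), ← hu]
  exact (ae_restrict_iUnion_iff _ _).2 h


/-- An invariant set is null as soon as its part in `Z(v₀)` is, since every vertex can be
reached from `v₀`. -/
lemma null_of_invariant
    (hv₀ : ∀ v : V, Green s r F β v₀ v ≠ 0 ∧ Green s r F β v₀ v ≠ ∞)
    (hm : Conformal s r F β m)
    {B : Set (PathSpace s r)} (hB : MeasurableSet B)
    (hBi : ∀ p, shift s r p ∈ B ↔ p ∈ B) (h0 : m (B ∩ cylV s r v₀) = 0) : m B = 0 := by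
  have h1 : ∀ v, m (B ∩ cylV s r v) = 0 := by
    intro v
    obtain ⟨n, hn⟩ := exists_Apow_ne_zero hv₀ v
    have h := conformal_iter hm (measurable_one.indicator hB :
      Measurable (B.indicator (1 : PathSpace s r → ℝ≥0∞))) n v₀
    have e : ∀ p, B.indicator (1 : PathSpace s r → ℝ≥0∞) ((shift s r)^[n] p) =
        B.indicator 1 p := invariant_iterate (indicator_invariant hBi) n
    simp_rw [e, lintegral_indicator_one hB, Measure.restrict_apply hB] at h
    rw [h0, eq_comm, ENNReal.tsum_eq_zero] at h
    exact (mul_eq_zero.1 (h v)).resolve_left hn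
  have hu : B = ⋃ v, B ∩ cylV s r v := by
    ext p; simp [cylV]
  rw [hu]
  exact measure_iUnion_null h1

/-- The finiteness of the Green function makes almost every path wandering, by the
Borel–Cantelli lemma. -/
lemma ae_wandering
    (hv₀ : ∀ v : V, Green s r F β v₀ v ≠ 0 ∧ Green s r F β v₀ v ≠ ∞)
    (hm : Conformal s r F β m) :
    ∀ᵐ p ∂m, Wandering s r p := by
  have h1 : ∀ᵐ p ∂m, ∀ w, {k | s (p.seq k) = w}.Finite := by
    rw [ae_all_iff]
    intro w
    refine ae_of_forall_cylV fun v => ?_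
    have hw := measurableSet_cylV (s := s) (r := r) w
    refine ae_finite_setOf_mem (s := fun k => {p : PathSpace s r | s (p.seq k) = w}) ?_
    have e : ∀ k, (m.restrict (cylV s r v)) {p : PathSpace s r | s (p.seq k) = w} =
        Apow s r F β k v w * m (cylV s r w) := by
      intro k
      have h := conformal_iter hm (measurable_one.indicator hw :
        Measurable ((cylV s r w).indicator (1 : PathSpace s r → ℝ≥0∞))) k v
      have e1 : ∀ p, (cylV s r w).indicator (1 : PathSpace s r → ℝ≥0∞)
          ((shift s r)^[k] p) = {p : PathSpace s r | s (p.seq k) = w}.indicator 1 p := by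
        intro p
        have : (shift s r)^[k] p ∈ cylV s r w ↔ p ∈ {p : PathSpace s r | s (p.seq k) = w} := by
          simp only [cylV, Set.mem_ofPred_eq, iterate_shift_seq, zero_add]
        classical
        rw [Set.indicator_apply, Set.indicator_apply]
        simp only [this, Pi.one_apply]
      simp_rw [e1, lintegral_indicator_one hw, Measure.restrict_apply hw] at h
      have hk : MeasurableSet {p : PathSpace s r | s (p.seq k) = w} := measurableSet_seq {w} k
      rw [lintegral_indicator_one hk] at h
      rw [h, tsum_eq_single w]
      · simp
      · intro u hu
        have : cylV s r w ∩ cylV s r u = ∅ := by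
          ext p
          simp only [cylV, Set.mem_inter_iff, Set.mem_ofPred_eq, Set.mem_empty_iff_false,
            iff_false, not_and]
          rintro rfl h
          exact hu h.symm
        simp [this]
    simp_rw [e, ENNReal.tsum_mul_right]
    exact ENNReal.mul_ne_top (green_ne_top hv₀ v w) (hm.2.1 w)
  filter_upwards [h1] with p hp F₀
  have hfin : (⋃ w ∈ F₀, {k | s (p.seq k) = w}).Finite :=
    F₀.finite_toSet.biUnion fun w _ => hp w
  obtain ⟨N, hN⟩ := hfin.bddAbove
  refine ⟨N + 1, fun i hi hmem => ?_⟩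
  have := hN (Set.mem_biUnion hmem (show i ∈ {k | s (p.seq k) = s (p.seq i)} from rfl))
  omega

lemma last_exit_tendsto (hm : Conformal s r F β m)
    {D : ℕ → Set V}
    {f : V → PathSpace s r → ℝ≥0∞} (hf : ∀ w, Measurable (f w))
    (hfi : ∀ w p, f w (shift s r p) = f w p) {C : ℝ≥0∞} (hC : C ≠ ∞)
    (hfC : ∀ w p, f w p ≤ C) {L : PathSpace s r → ℝ≥0∞}
    (hL : ∀ᵐ p ∂m, Tendsto (fun N => exitSum s r (D N) (fun k => f (s (p.seq k)) p) p)
      atTop (𝓝 (L p))) (v : V) :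
    Tendsto (fun N => ∑' w, Green s r F β v w *
        ∫⁻ p in cylV s r w, (NoRet s r (D N)).indicator (f w) p ∂m)
      atTop (𝓝 (∫⁻ p in cylV s r v, L p ∂m)) := by
  simp_rw [← last_exit hm hf hfi]
  refine tendsto_lintegral_of_dominated_convergence (fun _ => C)
    (fun N => measurable_exitSum hf _) (fun N => ae_of_all _ fun p => exitSum_le fun k => hfC _ _)
    ?_ (ae_restrict_of_ae hL)
  rw [setLIntegral_const]
  exact ENNReal.mul_ne_top hC (hm.2.1 v)

/-- For an invariant set `I` of paths visiting `S` infinitely often, the masses of `I ∩ Z(v)`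
are the limits of the mass distributions of the last exits from the finite parts of `S`. -/
lemma invariant_last_exit_tendsto
    (hv₀ : ∀ v : V, Green s r F β v₀ v ≠ 0 ∧ Green s r F β v₀ v ≠ ∞)
    (hm : Conformal s r F β m)
    {D : ℕ → Set V} (hDf : ∀ N, (D N).Finite)
    (hDm : Monotone D) (hDu : ∀ v, ∃ N, v ∈ D N)
    {I : Set (PathSpace s r)} (hI : MeasurableSet I)
    (hIi : ∀ p, shift s r p ∈ I ↔ p ∈ I) {S : Set V}
    (hS : ∀ p ∈ I, ∃ᶠ k in atTop, s (p.seq k) ∈ S) (v : V) :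
    Tendsto (fun N => ∑' w, Green s r F β v w *
        ∫⁻ p in cylV s r w, (NoRet s r (S ∩ D N)).indicator (I.indicator 1) p ∂m)
      atTop (𝓝 (m (I ∩ cylV s r v))) := by
  have h1 : m (I ∩ cylV s r v) = ∫⁻ p in cylV s r v, I.indicator 1 p ∂m := by
    rw [lintegral_indicator_one hI, Measure.restrict_apply hI]
  rw [h1]
  refine last_exit_tendsto hm (f := fun _ => I.indicator 1)
    (fun _ => measurable_one.indicator hI) (fun _ => indicator_invariant hIi)
    ENNReal.one_ne_top (fun _ p => ?_) ?_ v
  · exact Set.indicator_le_self' (fun _ _ => zero_le) p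
  · filter_upwards [ae_wandering hv₀ hm] with p hp
    by_cases hpI : p ∈ I
    · refine exitSum_tendsto (fun N => (hDf N).subset Set.inter_subset_right)
        (fun M N h => Set.inter_subset_inter_right S (hDm h)) hp (fun j => ?_)
        tendsto_const_nhds
      obtain ⟨i, hi, hiS⟩ := frequently_atTop.1 (hS p hpI) j
      obtain ⟨N, hN⟩ := hDu (s (p.seq i))
      exact ⟨i, hi, N, hiS, hN⟩
    · simp [exitSum, hpI]

lemma level_le
    (hv₀ : ∀ v : V, Green s r F β v₀ v ≠ 0 ∧ Green s r F β v₀ v ≠ ∞)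
    (hm : Conformal s r F β m)
    {I : Set (PathSpace s r)} (hI : MeasurableSet I)
    (hIi : ∀ p, shift s r p ∈ I ↔ p ∈ I) (v : V) {b : ℝ≥0∞} (hb : b ≠ ∞)
    (hS : ∀ p ∈ I, ∃ᶠ k in atTop, b < MartinK s r F β v₀ v (s (p.seq k))) :
    b * m (I ∩ cylV s r v₀) ≤ m (I ∩ cylV s r v) := by
  obtain ⟨D, hDf, hDm, hDu⟩ := exists_exhaustion V
  have h := fun u => invariant_last_exit_tendsto hv₀ hm hDf hDm hDu hI hIi
    (S := {w | b < MartinK s r F β v₀ v w}) hS u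
  refine le_of_tendsto_of_tendsto' (ENNReal.Tendsto.const_mul (h v₀) (Or.inr hb)) (h v)
    fun N => ?_
  rw [← ENNReal.tsum_mul_left]
  refine ENNReal.tsum_le_tsum fun w => ?_
  by_cases hw : w ∈ {w | b < MartinK s r F β v₀ v w} ∩ D N
  · rw [← mul_assoc, ← martinK_mul hv₀ v w]
    gcongr
    exact le_of_lt hw.1
  · simp [noRet_integral_eq_zero hw]

lemma le_level
    (hv₀ : ∀ v : V, Green s r F β v₀ v ≠ 0 ∧ Green s r F β v₀ v ≠ ∞)
    (hm : Conformal s r F β m)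
    {I : Set (PathSpace s r)} (hI : MeasurableSet I)
    (hIi : ∀ p, shift s r p ∈ I ↔ p ∈ I) (v : V) {a : ℝ≥0∞} (ha : a ≠ ∞)
    (hS : ∀ p ∈ I, ∃ᶠ k in atTop, MartinK s r F β v₀ v (s (p.seq k)) < a) :
    m (I ∩ cylV s r v) ≤ a * m (I ∩ cylV s r v₀) := by
  obtain ⟨D, hDf, hDm, hDu⟩ := exists_exhaustion V
  have h := fun u => invariant_last_exit_tendsto hv₀ hm hDf hDm hDu hI hIi
    (S := {w | MartinK s r F β v₀ v w < a}) hS u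
  refine le_of_tendsto_of_tendsto' (h v) (ENNReal.Tendsto.const_mul (h v₀) (Or.inr ha))
    fun N => ?_
  rw [← ENNReal.tsum_mul_left]
  refine ENNReal.tsum_le_tsum fun w => ?_
  by_cases hw : w ∈ {w | MartinK s r F β v₀ v w < a} ∩ D N
  · rw [← mul_assoc, ← martinK_mul hv₀ v w]
    gcongr
    exact le_of_lt hw.1
  · simp [noRet_integral_eq_zero hw]

end Convergence

/-! ### Limits of the Martin kernels along paths -/

section Limit

variable {s r : A → V}

variable (s r) in
/-- The limit of the Martin kernels `K(v, s(p_k))` along a path, encoded as the upper limit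
so that it is defined, invariant and measurable everywhere. -/
noncomputable def kap (F : A → ℝ) (β : ℝ) (v₀ v : V) (p : PathSpace s r) : ℝ≥0∞ :=
  limsup (fun k => MartinK s r F β v₀ v (s (p.seq k))) atTop

variable {F : A → ℝ} {β : ℝ} {v₀ : V}

lemma kap_shift (v : V) (p : PathSpace s r) :
    kap s r F β v₀ v (shift s r p) = kap s r F β v₀ v p :=
  limsup_nat_add (fun k => MartinK s r F β v₀ v (s (p.seq k))) 1

lemma measurable_kap (v : V) : Measurable (kap s r F β v₀ v) :=
  Measurable.limsup fun k => measurable_seq (fun a => MartinK s r F β v₀ v (s a)) k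

lemma kap_le {v : V} {C : ℝ≥0∞} (h : ∀ w, MartinK s r F β v₀ v w ≤ C) (p : PathSpace s r) :
    kap s r F β v₀ v p ≤ C :=
  limsup_le_of_le (by isBoundedDefault) (Eventually.of_forall fun k => h _)

variable [Countable V] [Countable A] {m : Measure (PathSpace s r)}

/-- Almost everywhere convergence of the Martin kernels. On the invariant set where
`K(v, s(p_k))` is infinitely often below `a` and infinitely often above `b > a`, the two
level estimates contradict each other. -/
lemma ae_tendsto_kap
    (hv₀ : ∀ v : V, Green s r F β v₀ v ≠ 0 ∧ Green s r F β v₀ v ≠ ∞)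
    (hm : Conformal s r F β m) :
    ∀ᵐ p ∂m, ∀ v,
    Tendsto (fun k => MartinK s r F β v₀ v (s (p.seq k))) atTop
      (𝓝 (kap s r F β v₀ v p)) := by
  rw [ae_all_iff]
  intro v
  have hbad : ∀ a b : ℚ, 0 ≤ a → a < b → ∀ᵐ p ∂m,
      ¬ (liminf (fun k => MartinK s r F β v₀ v (s (p.seq k))) atTop
          < (Real.toNNReal a : ℝ≥0∞) ∧
        (Real.toNNReal b : ℝ≥0∞) < kap s r F β v₀ v p) := by
    intro a b ha hab
    set I : Set (PathSpace s r) := {p |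
      liminf (fun k => MartinK s r F β v₀ v (s (p.seq k))) atTop < (Real.toNNReal a : ℝ≥0∞) ∧
        (Real.toNNReal b : ℝ≥0∞) < kap s r F β v₀ v p} with hIdef
    have hI : MeasurableSet I := by
      have hl : Measurable fun p : PathSpace s r =>
          liminf (fun k => MartinK s r F β v₀ v (s (p.seq k))) atTop :=
        Measurable.liminf fun k => measurable_seq (fun a => MartinK s r F β v₀ v (s a)) k
      exact (measurableSet_lt hl measurable_const).inter
        (measurableSet_lt measurable_const (measurable_kap v))
    have hIi : ∀ p, shift s r p ∈ I ↔ p ∈ I := by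
      intro p
      have := liminf_nat_add (fun k => MartinK s r F β v₀ v (s (p.seq k))) 1
      simp only [hIdef, Set.mem_ofPred_eq, kap_shift]
      rw [← this]
      rfl
    have h1 := level_le hv₀ hm hI hIi v (b := (Real.toNNReal b : ℝ≥0∞)) ENNReal.coe_ne_top
      fun p hp => frequently_lt_of_lt_limsup (by isBoundedDefault) hp.2
    have h2 := le_level hv₀ hm hI hIi v (a := (Real.toNNReal a : ℝ≥0∞)) ENNReal.coe_ne_top
      fun p hp => frequently_lt_of_liminf_lt (by isBoundedDefault) hp.1
    have h0 : m (I ∩ cylV s r v₀) = 0 := by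
      by_contra h
      have hfin : m (I ∩ cylV s r v₀) ≠ ∞ :=
        ne_top_of_le_ne_top (hm.2.1 v₀) (measure_mono Set.inter_subset_right)
      have h3 := (ENNReal.mul_le_mul_iff_left h hfin).1 (h1.trans h2)
      rw [ENNReal.coe_le_coe, Real.toNNReal_le_toNNReal_iff (by exact_mod_cast ha)] at h3
      exact absurd (by exact_mod_cast h3) (not_le.2 hab)
    have h4 := null_of_invariant hv₀ hm hI hIi h0
    rw [ae_iff]
    simpa only [not_not] using h4
  have hall : ∀ᵐ p ∂m, ∀ a b : ℚ, 0 ≤ a → a < b →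
      ¬ (liminf (fun k => MartinK s r F β v₀ v (s (p.seq k))) atTop
          < (Real.toNNReal a : ℝ≥0∞) ∧
        (Real.toNNReal b : ℝ≥0∞) < kap s r F β v₀ v p) := by
    simp only [ae_all_iff]
    exact hbad
  filter_upwards [hall] with p hp
  refine tendsto_of_le_liminf_of_limsup_le ?_ le_rfl
  by_contra! hlt
  obtain ⟨b, hb0, hb1, hb2⟩ := ENNReal.lt_iff_exists_rat_btwn.1 hlt
  obtain ⟨a, ha0, ha1, ha2⟩ := ENNReal.lt_iff_exists_rat_btwn.1 hb1
  refine hp a b ha0 ?_ ⟨ha1, hb2⟩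
  rw [ENNReal.coe_lt_coe, Real.toNNReal_lt_toNNReal_iff_of_nonneg (by exact_mod_cast ha0)] at ha2
  exact_mod_cast ha2

/-- On invariant functions, `kap v` is the density of `m` on `Z(v)` with respect to `m`
on `Z(v₀)`. -/
lemma lintegral_mul_kap
    (hv₀ : ∀ v : V, Green s r F β v₀ v ≠ 0 ∧ Green s r F β v₀ v ≠ ∞)
    (hm : Conformal s r F β m)
    {h : PathSpace s r → ℝ≥0∞} (hh : Measurable h)
    (hhi : ∀ p, h (shift s r p) = h p) {C : ℝ≥0∞} (hC : C ≠ ∞) (hhC : ∀ p, h p ≤ C) (v : V) :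
    ∫⁻ p in cylV s r v₀, kap s r F β v₀ v p * h p ∂m = ∫⁻ p in cylV s r v, h p ∂m := by
  obtain ⟨D, hDf, hDm, hDu⟩ := exists_exhaustion V
  obtain ⟨B, hB, hKB⟩ := martinK_bounded hv₀ v
  have hDu' : ∀ p : PathSpace s r, ∀ j, ∃ i, j ≤ i ∧ ∃ N, s (p.seq i) ∈ D N :=
    fun p j => ⟨j, le_rfl, hDu _⟩
  have h1 := last_exit_tendsto hm (D := D) (f := fun _ => h) (fun _ => hh) (fun _ => hhi) hC
    (fun _ => hhC) (L := h) (by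
      filter_upwards [ae_wandering hv₀ hm] with p hp
      exact exitSum_tendsto hDf hDm hp (hDu' p) tendsto_const_nhds) v
  have h2 := last_exit_tendsto hm (D := D) (f := fun w p => MartinK s r F β v₀ v w * h p)
    (fun w => hh.const_mul _) (fun w p => by simp only [hhi]) (ENNReal.mul_ne_top hB hC)
    (fun w p => mul_le_mul' (hKB w) (hhC p)) (L := fun p => kap s r F β v₀ v p * h p) (by
      filter_upwards [ae_wandering hv₀ hm, ae_tendsto_kap hv₀ hm] with p hp hp'
      exact exitSum_tendsto hDf hDm hp (hDu' p)
        (ENNReal.Tendsto.mul_const (hp' v) (Or.inr (ne_top_of_le_ne_top hC (hhC p))))) v₀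
  refine tendsto_nhds_unique h2 (h1.congr fun N => tsum_congr fun w => ?_)
  have e : ∀ p, (NoRet s r (D N)).indicator (fun p => MartinK s r F β v₀ v w * h p) p =
      MartinK s r F β v₀ v w * (NoRet s r (D N)).indicator h p := by
    intro p
    by_cases hp : p ∈ NoRet s r (D N) <;> simp [hp]
  simp_rw [e]
  rw [lintegral_const_mul _ (hh.indicator (measurableSet_noRet _)), ← mul_assoc,
    ← martinK_mul hv₀ v w, mul_comm (MartinK s r F β v₀ v w)]

end Limit

/-! ### Harmonic vectors as potentials of escape vectors -/

section Balayage

variable {s r : A → V} {F : A → ℝ} {β : ℝ}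

variable (s r F β) in
/-- For a harmonic vector `φ`, the mass of the paths starting at a vertex that avoid `D` at the
times `1, …, n`. -/
noncomputable def avoid (D : Set V) (φ : V → ℝ≥0∞) : ℕ → V → ℝ≥0∞
  | 0 => φ
  | n + 1 => fun w => ∑' u, Amat s r F β w u * Dᶜ.indicator (avoid D φ n) u

variable (s r F β) in
/-- The escape vector of `φ` on `D`: the mass of the paths starting at a vertex of `D` that
never return to `D`. It is the charge whose potential agrees with `φ` on `D`. -/
noncomputable def esc (D : Set V) (φ : V → ℝ≥0∞) : V → ℝ≥0∞ :=
  D.indicator fun w => ⨅ n, avoid s r F β D φ n w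

lemma avoid_mono (D : Set V) {φ φ' : V → ℝ≥0∞} (h : ∀ v, φ v ≤ φ' v) (n : ℕ) (w : V) :
    avoid s r F β D φ n w ≤ avoid s r F β D φ' n w := by
  induction n generalizing w with
  | zero => exact h w
  | succ n ih =>
    refine ENNReal.tsum_le_tsum fun u => mul_le_mul_right ?_ _
    exact Set.indicator_le_indicator (ih u)

lemma esc_mono (D : Set V) {φ φ' : V → ℝ≥0∞} (h : ∀ v, φ v ≤ φ' v) (w : V) :
    esc s r F β D φ w ≤ esc s r F β D φ' w :=
  Set.indicator_le_indicator (iInf_mono fun n => avoid_mono D h n w)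

lemma avoid_antitone (D : Set V) {φ : V → ℝ≥0∞}
    (h : ∀ v, ∑' w, Amat s r F β v w * φ w = φ v) (w : V) :
    Antitone fun n => avoid s r F β D φ n w := by
  refine antitone_nat_of_succ_le fun n => ?_
  induction n generalizing w with
  | zero =>
    refine le_of_le_of_eq ?_ (h w)
    refine ENNReal.tsum_le_tsum fun u => mul_le_mul_right ?_ _
    exact Set.indicator_le_self' (fun _ _ => zero_le) u
  | succ n ih =>
    refine ENNReal.tsum_le_tsum fun u => mul_le_mul_right ?_ _
    exact Set.indicator_le_indicator (ih u)

/-- Decomposition of a harmonic vector according to the last visit to `D` during the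
times `0, …, n`. -/
lemma avoid_decomp (D : Set V) {φ : V → ℝ≥0∞}
    (h : ∀ v, ∑' w, Amat s r F β v w * φ w = φ v) (n : ℕ) (v : V) :
    φ v = ∑ k ∈ Finset.range (n + 1), ∑' w, Apow s r F β k v w *
        D.indicator (avoid s r F β D φ (n - k)) w +
      Dᶜ.indicator (avoid s r F β D φ n) v := by
  classical
  have hzero : ∀ (g : V → ℝ≥0∞) (v : V), ∑' w, Apow s r F β 0 v w * g w = g v := by
    intro g v
    rw [tsum_eq_single v]
    · simp [Apow_zero]
    · intro w hw
      simp [Apow_zero, hw.symm]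
  induction n generalizing v with
  | zero =>
    rw [Finset.sum_range_one, hzero]
    exact (Set.indicator_self_add_compl_apply D φ v).symm
  | succ n ih =>
    have h1 : φ v = ∑' u, Amat s r F β v u *
        ((∑ k ∈ Finset.range (n + 1), ∑' w, Apow s r F β k u w *
          D.indicator (avoid s r F β D φ (n - k)) w) +
        Dᶜ.indicator (avoid s r F β D φ n) u) := by
      rw [← h v]
      exact tsum_congr fun u => by rw [← ih u]
    have h2 : ∀ k, ∑' u, Amat s r F β v u * ∑' w, Apow s r F β k u w *
          D.indicator (avoid s r F β D φ (n - k)) w =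
        ∑' w, Apow s r F β (k + 1) v w * D.indicator (avoid s r F β D φ (n - k)) w := by
      intro k
      simp_rw [Apow_succ, ← ENNReal.tsum_mul_right, ← ENNReal.tsum_mul_left]
      rw [ENNReal.tsum_comm]
      simp_rw [mul_assoc]
    rw [h1]
    simp_rw [mul_add, Finset.mul_sum]
    rw [ENNReal.tsum_add, Summable.tsum_finsetSum fun _ _ => ENNReal.summable]
    simp_rw [h2]
    rw [Finset.sum_range_succ' _ (n + 1), hzero, Nat.sub_zero, add_assoc,
      Set.indicator_self_add_compl_apply]
    simp_rw [Nat.add_sub_add_right]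
    rfl

/-- A harmonic vector agrees on a finite set `D` with the potential of its escape vector;
the finiteness of the Green function makes visits at late times negligible. -/
lemma harmonic_eq_potential {D : Set V} (hD : D.Finite)
    (hG : ∀ v w, Green s r F β v w ≠ ∞) {φ : V → ℝ≥0∞} (hφ : ∀ v, φ v ≠ ∞)
    (h : ∀ v, ∑' w, Amat s r F β v w * φ w = φ v) {v : V} (hv : v ∈ D) :
    φ v = ∑' w, Green s r F β v w * esc s r F β D φ w := by
  classical
  have hrhs : ∑' w, Green s r F β v w * esc s r F β D φ w =
      ∑ w ∈ hD.toFinset, ∑' k, Apow s r F β k v w * ⨅ n, avoid s r F β D φ n w := by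
    rw [tsum_eq_sum (s := hD.toFinset)]
    · refine Finset.sum_congr rfl fun w hw => ?_
      rw [ENNReal.tsum_mul_right, esc, Set.indicator_of_mem (hD.mem_toFinset.1 hw)]
      rfl
    · intro w hw
      rw [esc, Set.indicator_of_notMem (fun h => hw (hD.mem_toFinset.2 h)), mul_zero]
  have hlhs : ∀ n, φ v = ∑ w ∈ hD.toFinset, ∑' k, if k ∈ Finset.range (n + 1) then
      Apow s r F β k v w * avoid s r F β D φ (n - k) w else 0 := by
    intro n
    conv_lhs => rw [avoid_decomp D h n v]
    rw [Set.indicator_of_notMem (show v ∉ Dᶜ from fun h' => h' hv), add_zero]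
    have e1 : ∀ k, ∑' w, Apow s r F β k v w * D.indicator (avoid s r F β D φ (n - k)) w =
        ∑ w ∈ hD.toFinset, Apow s r F β k v w * avoid s r F β D φ (n - k) w := by
      intro k
      rw [tsum_eq_sum (s := hD.toFinset)]
      · refine Finset.sum_congr rfl fun w hw => ?_
        rw [Set.indicator_of_mem (hD.mem_toFinset.1 hw)]
      · intro w hw
        rw [Set.indicator_of_notMem (fun h => hw (hD.mem_toFinset.2 h)), mul_zero]
    simp_rw [e1]
    rw [Finset.sum_comm]
    refine Finset.sum_congr rfl fun w _ => ?_
    rw [tsum_eq_sum (s := Finset.range (n + 1))]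
    · exact Finset.sum_congr rfl fun k hk => (if_pos hk).symm
    · intro k hk
      exact if_neg hk
  have hlim : ∀ w, Tendsto (fun n => ∑' k, if k ∈ Finset.range (n + 1) then
      Apow s r F β k v w * avoid s r F β D φ (n - k) w else 0) atTop
      (𝓝 (∑' k, Apow s r F β k v w * ⨅ n, avoid s r F β D φ n w)) := by
    intro w
    have hpow : ∀ k, Apow s r F β k v w ≠ ∞ := fun k =>
      ne_top_of_le_ne_top (hG v w) (Apow_le_green k v w)
    simp_rw [← lintegral_count]
    refine tendsto_lintegral_of_dominated_convergence
      (fun k => Apow s r F β k v w * φ w) (fun n => measurable_from_top)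
      (fun n => ae_of_all _ fun k => ?_) ?_ (ae_of_all _ fun k => ?_)
    · beta_reduce
      split_ifs
      · exact mul_le_mul_right (avoid_antitone D h w (Nat.zero_le (n - k))) _
      · exact zero_le
    · rw [lintegral_count, ENNReal.tsum_mul_right]
      exact ENNReal.mul_ne_top (hG v w) (hφ w)
    · have h1 : Tendsto (fun n => avoid s r F β D φ (n - k) w) atTop
          (𝓝 (⨅ n, avoid s r F β D φ n w)) :=
        (tendsto_atTop_iInf (avoid_antitone D h w)).comp (tendsto_sub_atTop_nat k)
      refine (ENNReal.Tendsto.const_mul h1 (Or.inr (hpow k))).congr' ?_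
      filter_upwards [eventually_ge_atTop k] with n hn
      rw [if_pos (Finset.mem_range.2 (by omega))]
  rw [hrhs]
  refine tendsto_nhds_unique (f := fun _ : ℕ => φ v) (l := atTop) tendsto_const_nhds ?_
  refine (tendsto_finsetSum hD.toFinset fun w _ => hlim w).congr fun n => ?_
  exact (hlhs n).symm

end Balayage

/-! ### Harmonicity and escape vectors of the limits -/

section Minimal

variable {s r : A → V} {F : A → ℝ} {β : ℝ} {v₀ : V}

lemma measurable_avoid_kap [Countable V] (D : Set V) (n : ℕ) (w : V) :
    Measurable fun p : PathSpace s r =>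
      avoid s r F β D (fun v => kap s r F β v₀ v p) n w := by
  classical
  induction n generalizing w with
  | zero => exact measurable_kap w
  | succ n ih =>
    refine Measurable.tsum fun u => Measurable.const_mul ?_ _
    simp only [Set.indicator_apply]
    by_cases h : u ∈ Dᶜ
    · simpa only [if_pos h] using ih u
    · simp only [if_neg h, measurable_const]

lemma measurable_esc_kap [Countable V] (D : Set V) (w : V) :
    Measurable fun p : PathSpace s r =>
      esc s r F β D (fun v => kap s r F β v₀ v p) w := by
  classical
  simp only [esc, Set.indicator_apply]
  by_cases h : w ∈ D
  · simp only [if_pos h]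
    exact Measurable.iInf fun n => measurable_avoid_kap D n w
  · simp only [if_neg h, measurable_const]

variable [Countable V] [Countable A] {m : Measure (PathSpace s r)}

lemma ae_eq_of_invariant
    (hv₀ : ∀ v : V, Green s r F β v₀ v ≠ 0 ∧ Green s r F β v₀ v ≠ ∞)
    (hm : Conformal s r F β m)
    {f g : PathSpace s r → ℝ≥0∞} (hf : Measurable f) (hg : Measurable g)
    (hfi : ∀ p, f (shift s r p) = f p) (hgi : ∀ p, g (shift s r p) = g p)
    (h : ∀ᵐ p ∂(m.restrict (cylV s r v₀)), f p = g p) : ∀ᵐ p ∂m, f p = g p := by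
  have hB : MeasurableSet {p | ¬ f p = g p} := (measurableSet_eq_fun hf hg).compl
  rw [ae_iff]
  refine null_of_invariant hv₀ hm hB (fun p => ?_) ?_
  · simp only [Set.mem_ofPred_eq, hfi, hgi]
  · rw [ae_iff, Measure.restrict_apply hB] at h
    exact h

/-- If two invariant functions have equal integrals over all invariant parts of `Z(v₀)`, then
testing against the invariant set `{f < g}` yields `g ≤ f`. -/
lemma ae_le_of_invariant {f g : PathSpace s r → ℝ≥0∞} (hf : Measurable f) (hg : Measurable g)
    (hfi : ∀ p, f (shift s r p) = f p) (hgi : ∀ p, g (shift s r p) = g p)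
    (hfin : ∫⁻ p in cylV s r v₀, f p ∂m ≠ ∞)
    (h : ∀ I, MeasurableSet I → (∀ p, shift s r p ∈ I ↔ p ∈ I) →
      ∫⁻ p in cylV s r v₀, f p * I.indicator 1 p ∂m =
        ∫⁻ p in cylV s r v₀, g p * I.indicator 1 p ∂m) :
    ∀ᵐ p ∂(m.restrict (cylV s r v₀)), g p ≤ f p := by
  have hI : MeasurableSet {p | f p < g p} := measurableSet_lt hf hg
  have h1 := h _ hI fun p => by simp only [Set.mem_ofPred_eq, hfi, hgi]
  have hind : Measurable ({p | f p < g p}.indicator (1 : PathSpace s r → ℝ≥0∞)) :=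
    measurable_one.indicator hI
  have h2 := ae_eq_of_ae_le_of_lintegral_le
    (μ := m.restrict (cylV s r v₀)) (f := fun p => f p * {p | f p < g p}.indicator 1 p)
    (g := fun p => g p * {p | f p < g p}.indicator 1 p)
    (ae_of_all _ fun p => by
      by_cases hp : p ∈ {p | f p < g p}
      · simpa [Set.indicator_of_mem hp] using le_of_lt hp
      · simp [Set.indicator_of_notMem hp])
    (ne_top_of_le_ne_top hfin (lintegral_mono fun p => by
      by_cases hp : p ∈ {p | f p < g p}
      · simp [Set.indicator_of_mem hp]
      · simp [Set.indicator_of_notMem hp]))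
    (hg.mul hind).aemeasurable h1.ge
  filter_upwards [h2] with p hp
  by_contra! hlt
  have hmem : p ∈ {p | f p < g p} := hlt
  simp only [Set.indicator_of_mem hmem, Pi.one_apply, mul_one] at hp
  exact hlt.ne hp

lemma ae_kap_harmonic
    (hv₀ : ∀ v : V, Green s r F β v₀ v ≠ 0 ∧ Green s r F β v₀ v ≠ ∞)
    (hm : Conformal s r F β m) :
    ∀ᵐ p ∂m, ∀ v,
    ∑' w, Amat s r F β v w * kap s r F β v₀ w p = kap s r F β v₀ v p := by
  rw [ae_all_iff]
  intro v
  have hf : Measurable fun p : PathSpace s r =>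
      ∑' w, Amat s r F β v w * kap s r F β v₀ w p :=
    Measurable.tsum fun w => (measurable_kap w).const_mul _
  have hfi : ∀ p : PathSpace s r, ∑' w, Amat s r F β v w * kap s r F β v₀ w (shift s r p) =
      ∑' w, Amat s r F β v w * kap s r F β v₀ w p := fun p => by simp only [kap_shift]
  have key : ∀ I, MeasurableSet I → (∀ p, shift s r p ∈ I ↔ p ∈ I) →
      ∫⁻ p in cylV s r v₀, (∑' w, Amat s r F β v w * kap s r F β v₀ w p) *
          I.indicator 1 p ∂m =
        ∫⁻ p in cylV s r v₀, kap s r F β v₀ v p * I.indicator 1 p ∂m := by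
    intro I hI hIi
    have hind : Measurable (I.indicator (1 : PathSpace s r → ℝ≥0∞)) :=
      measurable_one.indicator hI
    have hR := fun u => lintegral_mul_kap hv₀ hm hind (indicator_invariant hIi)
      ENNReal.one_ne_top (fun p => Set.indicator_le_self' (fun _ _ => zero_le) p) u
    rw [hR v]
    simp_rw [← ENNReal.tsum_mul_right, mul_assoc]
    rw [lintegral_tsum (f := fun w p => Amat s r F β v w *
      (kap s r F β v₀ w p * I.indicator 1 p))
      fun w => (((measurable_kap w).mul hind).const_mul _).aemeasurable]
    have e : ∀ w, ∫⁻ p in cylV s r v₀, Amat s r F β v w *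
        (kap s r F β v₀ w p * I.indicator 1 p) ∂m =
        Amat s r F β v w * ∫⁻ p in cylV s r w, I.indicator 1 p ∂m := by
      intro w
      rw [lintegral_const_mul (f := fun p => kap s r F β v₀ w p * I.indicator 1 p) _
        ((measurable_kap w).mul hind), hR w]
    simp_rw [e]
    rw [← conformal_one hm v hind]
    exact lintegral_congr fun p => indicator_invariant hIi p
  have hfing : ∫⁻ p in cylV s r v₀, kap s r F β v₀ v p ∂m ≠ ∞ := by
    have h1 := lintegral_mul_kap hv₀ hm (h := 1) measurable_one (fun _ => rfl)
      ENNReal.one_ne_top (fun _ => le_rfl) v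
    simp only [Pi.one_apply, mul_one, lintegral_one, Measure.restrict_apply_univ] at h1
    rw [h1]
    exact hm.2.1 v
  have hfinf : ∫⁻ p in cylV s r v₀, ∑' w, Amat s r F β v w * kap s r F β v₀ w p ∂m ≠ ∞ := by
    have h1 := key Set.univ MeasurableSet.univ fun p => by simp
    simp only [Set.indicator_univ, Pi.one_apply, mul_one] at h1
    rw [h1]
    exact hfing
  refine ae_eq_of_invariant hv₀ hm hf (measurable_kap v) hfi (kap_shift v) ?_
  filter_upwards [ae_le_of_invariant hf (measurable_kap v) hfi (kap_shift v) hfinf key,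
    ae_le_of_invariant (measurable_kap v) hf (kap_shift v) hfi hfing
      fun I hI hIi => (key I hI hIi).symm] with p h1 h2
  exact le_antisymm h2 h1

lemma lintegral_avoid
    (hv₀ : ∀ v : V, Green s r F β v₀ v ≠ 0 ∧ Green s r F β v₀ v ≠ ∞)
    (hm : Conformal s r F β m)
    (D : Set V) {h : PathSpace s r → ℝ≥0∞} (hh : Measurable h)
    (hhi : ∀ p, h (shift s r p) = h p) {C : ℝ≥0∞} (hC : C ≠ ∞) (hhC : ∀ p, h p ≤ C)
    (n : ℕ) (w : V) :
    ∫⁻ p in cylV s r v₀, avoid s r F β D (fun v => kap s r F β v₀ v p) n w * h p ∂m =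
      ∫⁻ q in cylV s r w, {q : PathSpace s r | ∀ i < n, s (q.seq (i + 1)) ∉ D}.indicator h q ∂m
    := by
  classical
  induction n generalizing w with
  | zero =>
    simp only [avoid, Nat.not_lt_zero, false_imp_iff, implies_true, Set.ofPred_true,
      Set.indicator_univ]
    exact lintegral_mul_kap hv₀ hm hh hhi hC hhC w
  | succ n ih =>
    have hmeas : ∀ n, MeasurableSet {q : PathSpace s r | ∀ i < n, s (q.seq (i + 1)) ∉ D} := by
      intro n
      have : {q : PathSpace s r | ∀ i < n, s (q.seq (i + 1)) ∉ D} =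
          ⋂ i, ⋂ (_ : i < n), {q | s (q.seq (i + 1)) ∈ Dᶜ} := by
        ext q; simp
      rw [this]
      exact MeasurableSet.iInter fun i => MeasurableSet.iInter fun _ => measurableSet_seq _ _
    set E : Set (PathSpace s r) := {q | s (q.seq 0) ∈ Dᶜ} ∩
      {q | ∀ i < n, s (q.seq (i + 1)) ∉ D} with hE
    have hEm : MeasurableSet E := (measurableSet_seq _ _).inter (hmeas n)
    have hrhs := conformal_one hm w (hh.indicator hEm)
    have e1 : ∀ q, E.indicator h (shift s r q) =
        {q : PathSpace s r | ∀ i < n + 1, s (q.seq (i + 1)) ∉ D}.indicator h q := by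
      intro q
      rw [Set.indicator_apply, Set.indicator_apply, hhi]
      refine if_congr ?_ rfl rfl
      simp only [hE, Set.mem_inter_iff, Set.mem_ofPred_eq, shift, Set.mem_compl_iff]
      constructor
      · rintro ⟨h0, h1⟩ i hi
        cases i with
        | zero => exact h0
        | succ i => exact h1 i (by omega)
      · intro h1
        exact ⟨h1 0 (by omega), fun i hi => h1 (i + 1) (by omega)⟩
    simp_rw [e1] at hrhs
    rw [hrhs]
    simp only [avoid]
    simp_rw [← ENNReal.tsum_mul_right, mul_assoc]
    have hmi : ∀ u, Measurable fun p : PathSpace s r =>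
        Dᶜ.indicator (avoid s r F β D (fun v => kap s r F β v₀ v p) n) u * h p := by
      intro u
      refine Measurable.mul ?_ hh
      simp only [Set.indicator_apply]
      by_cases hu : u ∈ Dᶜ
      · simpa only [if_pos hu] using measurable_avoid_kap D n u
      · simp only [if_neg hu, measurable_const]
    rw [lintegral_tsum fun u => ((hmi u).const_mul _).aemeasurable]
    refine tsum_congr fun u => ?_
    rw [lintegral_const_mul _ (hmi u)]
    congr 1
    by_cases hu : u ∈ Dᶜ
    · simp only [Set.indicator_of_mem hu]
      rw [ih u]
      refine setLIntegral_congr_fun (measurableSet_cylV u) fun q hq => ?_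
      have hq' : s (q.seq 0) = u := hq
      simp only [Set.indicator_apply]
      refine if_congr ?_ rfl rfl
      simp only [hE, Set.mem_inter_iff, Set.mem_ofPred_eq, hq', hu, true_and]
    · simp only [Set.indicator_of_notMem hu, zero_mul, lintegral_zero]
      rw [setLIntegral_congr_fun (measurableSet_cylV u) (g := fun _ => 0), lintegral_zero]
      intro q hq
      refine Set.indicator_of_notMem (fun h' => hu ?_) _
      rw [← show s (q.seq 0) = u from hq]
      exact h'.1

/-- The escape vectors of the limits `kap` integrate, against invariant functions, to the
restriction of `m` to the paths without return to `D`. -/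
lemma lintegral_esc
    (hv₀ : ∀ v : V, Green s r F β v₀ v ≠ 0 ∧ Green s r F β v₀ v ≠ ∞)
    (hm : Conformal s r F β m)
    (D : Set V) {h : PathSpace s r → ℝ≥0∞} (hh : Measurable h)
    (hhi : ∀ p, h (shift s r p) = h p) {C : ℝ≥0∞} (hC : C ≠ ∞) (hhC : ∀ p, h p ≤ C)
    (w : V) :
    ∫⁻ p in cylV s r v₀, esc s r F β D (fun v => kap s r F β v₀ v p) w * h p ∂m =
      ∫⁻ q in cylV s r w, (NoRet s r D).indicator h q ∂m := by
  classical
  by_cases hw : w ∈ D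
  swap
  · simp only [esc, Set.indicator_of_notMem hw, zero_mul, lintegral_zero,
      noRet_integral_eq_zero hw]
  simp only [esc, Set.indicator_of_mem hw]
  have hmeas : ∀ n, MeasurableSet {q : PathSpace s r | ∀ i < n, s (q.seq (i + 1)) ∉ D} := by
    intro n
    have : {q : PathSpace s r | ∀ i < n, s (q.seq (i + 1)) ∉ D} =
        ⋂ i, ⋂ (_ : i < n), {q | s (q.seq (i + 1)) ∈ Dᶜ} := by
      ext q; simp
    rw [this]
    exact MeasurableSet.iInter fun i => MeasurableSet.iInter fun _ => measurableSet_seq _ _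
  obtain ⟨B, hB, hKB⟩ := martinK_bounded hv₀ w
  have hL : Tendsto (fun n => ∫⁻ p in cylV s r v₀,
      avoid s r F β D (fun v => kap s r F β v₀ v p) n w * h p ∂m) atTop
      (𝓝 (∫⁻ p in cylV s r v₀,
        (⨅ n, avoid s r F β D (fun v => kap s r F β v₀ v p) n w) * h p ∂m)) := by
    refine tendsto_lintegral_of_dominated_convergence (fun _ => B * C)
      (fun n => (measurable_avoid_kap D n w).mul hh) (fun n => ?_) ?_ ?_
    · filter_upwards [ae_restrict_of_ae (ae_kap_harmonic hv₀ hm)] with p hp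
      exact mul_le_mul' ((avoid_antitone D hp w (Nat.zero_le n)).trans (kap_le hKB p)) (hhC p)
    · rw [setLIntegral_const]
      exact ENNReal.mul_ne_top (ENNReal.mul_ne_top hB hC) (hm.2.1 v₀)
    · filter_upwards [ae_restrict_of_ae (ae_kap_harmonic hv₀ hm)] with p hp
      exact ENNReal.Tendsto.mul_const (tendsto_atTop_iInf (avoid_antitone D hp w))
        (Or.inr (ne_top_of_le_ne_top hC (hhC p)))
  have hR : Tendsto (fun n => ∫⁻ q in cylV s r w,
      {q : PathSpace s r | ∀ i < n, s (q.seq (i + 1)) ∉ D}.indicator h q ∂m) atTop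
      (𝓝 (∫⁻ q in cylV s r w, (NoRet s r D).indicator h q ∂m)) := by
    refine tendsto_lintegral_of_dominated_convergence (fun _ => C)
      (fun n => hh.indicator (hmeas n)) (fun n => ae_of_all _ fun q => ?_) ?_ ?_
    · exact (Set.indicator_le_self' (fun _ _ => zero_le) q).trans (hhC q)
    · rw [setLIntegral_const]
      exact ENNReal.mul_ne_top hC (hm.2.1 w)
    · refine (ae_restrict_iff' (measurableSet_cylV w)).2 (ae_of_all _ fun q hq => ?_)
      have hq' : s (q.seq 0) = w := hq
      refine tendsto_const_nhds.congr' ?_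
      by_cases hall : ∀ i, s (q.seq (i + 1)) ∉ D
      · refine Eventually.of_forall fun n => ?_
        beta_reduce
        rw [Set.indicator_of_mem (show q ∈ NoRet s r D from ⟨by rwa [hq'], hall⟩),
          Set.indicator_of_mem (show q ∈ {q : PathSpace s r | ∀ i < n, s (q.seq (i + 1)) ∉ D}
            from fun i _ => hall i)]
      · rw [Set.indicator_of_notMem (fun h' : q ∈ NoRet s r D => hall h'.2)]
        push Not at hall
        obtain ⟨i, hi⟩ := hall
        filter_upwards [eventually_gt_atTop i] with n hn
        rw [Set.indicator_of_notMem]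
        exact fun h' => h' i hn hi
  simp_rw [lintegral_avoid hv₀ hm D hh hhi hC hhC] at hL
  exact tendsto_nhds_unique hL hR

end Minimal

/-! ### Minimality of the limits -/

section Spread

variable {s r : A → V} {F : A → ℝ} {β : ℝ} {v₀ : V}

variable (s r F β v₀) in
/-- The average distance between `K(v, ·)` and the limit `kap v p`, with respect to the measure
`w ↦ G(v₀, w) esc(w)` representing the vector `kap · p` on `D`. Its smallness forces every
harmonic vector below `kap · p` to be proportional to it. -/
noncomputable def spread (D : Set V) (v : V) (p : PathSpace s r) : ℝ≥0∞ :=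
  ∑' w, Green s r F β v₀ w * (esc s r F β D (fun u => kap s r F β v₀ u p) w *
    ((MartinK s r F β v₀ v w - kap s r F β v₀ v p) +
      (kap s r F β v₀ v p - MartinK s r F β v₀ v w)))

lemma measurable_spread [Countable V] (D : Set V) (v : V) :
    Measurable (spread s r F β v₀ D v) :=
  Measurable.tsum fun w => ((measurable_esc_kap D w).mul
    ((measurable_const.sub (measurable_kap v)).add
      ((measurable_kap v).sub measurable_const))).const_mul _

lemma spread_shift (D : Set V) (v : V) (p : PathSpace s r) :
    spread s r F β v₀ D v (shift s r p) = spread s r F β v₀ D v p := by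
  simp only [spread, kap_shift]

/-- By Fatou's lemma it suffices that the integrals over `Z(v₀)` of the spreads tend to `0`;
these integrals are the integrals of `|K(v, ·) - kap v|` at the last exit from `D N`. -/
lemma ae_liminf_spread [Countable V] [Countable A] {m : Measure (PathSpace s r)}
    (hv₀ : ∀ v : V, Green s r F β v₀ v ≠ 0 ∧ Green s r F β v₀ v ≠ ∞)
    (hm : Conformal s r F β m) {D : ℕ → Set V} (hDf : ∀ N, (D N).Finite)
    (hDm : Monotone D) (hDu : ∀ v, ∃ N, v ∈ D N) :
    ∀ᵐ p ∂m, ∀ v, liminf (fun N => spread s r F β v₀ (D N) v p) atTop = 0 := by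
  rw [ae_all_iff]
  intro v
  obtain ⟨B, hB, hKB⟩ := martinK_bounded hv₀ v
  set d : V → PathSpace s r → ℝ≥0∞ := fun w p =>
    (MartinK s r F β v₀ v w - kap s r F β v₀ v p) +
      (kap s r F β v₀ v p - MartinK s r F β v₀ v w) with hd
  have hdm : ∀ w, Measurable (d w) := fun w =>
    (measurable_const.sub (measurable_kap v)).add ((measurable_kap v).sub measurable_const)
  have hdi : ∀ w p, d w (shift s r p) = d w p := fun w p => by simp only [hd, kap_shift]
  have hdB : ∀ w p, d w p ≤ B + B := fun w p =>
    add_le_add (tsub_le_self.trans (hKB w)) (tsub_le_self.trans (kap_le hKB p))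
  have hint : ∀ N, ∫⁻ p in cylV s r v₀, spread s r F β v₀ (D N) v p ∂m =
      ∑' w, Green s r F β v₀ w *
        ∫⁻ p in cylV s r w, (NoRet s r (D N)).indicator (d w) p ∂m := by
    intro N
    unfold spread
    rw [lintegral_tsum (f := fun w p => Green s r F β v₀ w *
      (esc s r F β (D N) (fun u => kap s r F β v₀ u p) w * d w p))
      fun w => (((measurable_esc_kap (D N) w).mul (hdm w)).const_mul _).aemeasurable]
    refine tsum_congr fun w => ?_
    rw [lintegral_const_mul
      (f := fun p => esc s r F β (D N) (fun u => kap s r F β v₀ u p) w * d w p) _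
      ((measurable_esc_kap (D N) w).mul (hdm w)),
      lintegral_esc hv₀ hm (D N) (hdm w) (hdi w) (ENNReal.add_ne_top.2 ⟨hB, hB⟩) (hdB w)]
  have hlim := last_exit_tendsto hm (D := D) (f := d) hdm hdi (ENNReal.add_ne_top.2 ⟨hB, hB⟩)
    hdB (L := fun _ => 0) (by
      filter_upwards [ae_wandering hv₀ hm, ae_tendsto_kap hv₀ hm] with p hp hp'
      refine exitSum_tendsto hDf hDm hp (fun j => ⟨j, le_rfl, hDu _⟩) ?_
      have hk : kap s r F β v₀ v p ≠ ∞ := ne_top_of_le_ne_top hB (kap_le hKB p)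
      have h1 := ENNReal.Tendsto.sub (hp' v)
        (tendsto_const_nhds (x := kap s r F β v₀ v p)) (Or.inl hk)
      have h2 := ENNReal.Tendsto.sub (tendsto_const_nhds (x := kap s r F β v₀ v p))
        (hp' v) (Or.inl hk)
      simpa only [tsub_self, add_zero] using h1.add h2) v₀
  simp_rw [← hint, lintegral_zero] at hlim
  have hz : ∫⁻ p in cylV s r v₀, liminf (fun N => spread s r F β v₀ (D N) v p) atTop ∂m = 0 := by
    refine le_antisymm ?_ zero_le
    refine (lintegral_liminf_le fun N => measurable_spread (D N) v).trans ?_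
    rw [hlim.liminf_eq]
  have hlm : Measurable fun p : PathSpace s r =>
      liminf (fun N => spread s r F β v₀ (D N) v p) atTop :=
    Measurable.liminf fun N => measurable_spread (D N) v
  refine ae_eq_of_invariant hv₀ hm hlm measurable_const
    (fun p => by simp only [spread_shift]) (fun _ => rfl) ?_
  exact (lintegral_eq_zero_iff hlm).1 hz

/-- A limit of Martin kernels which is harmonic and has vanishing spread is minimal: a harmonic
`φ ≤ kap · p` is on `D N` the potential of its escape vector, so that `φ v` differs from
`kap v p * φ v₀` at most by the spread. -/
lemma kap_minimal
    (hv₀ : ∀ v : V, Green s r F β v₀ v ≠ 0 ∧ Green s r F β v₀ v ≠ ∞)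
    {D : ℕ → Set V} (hDf : ∀ N, (D N).Finite)
    (hDm : Monotone D) (hDu : ∀ v, ∃ N, v ∈ D N) {p : PathSpace s r}
    (hharm : ∀ v, ∑' w, Amat s r F β v w * kap s r F β v₀ w p = kap s r F β v₀ v p)
    (hspread : ∀ v, liminf (fun N => spread s r F β v₀ (D N) v p) atTop = 0) :
    IsMinimalHarmonic (Amat s r F β) (fun v => kap s r F β v₀ v p) ∧
      kap s r F β v₀ v₀ p = 1 := by
  have hone : kap s r F β v₀ v₀ p = 1 := by
    simp only [kap, martinK_self hv₀, limsup_const]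
  refine ⟨⟨⟨fun h => ?_, fun v => ?_, hharm⟩, fun φ hφ hle => ?_⟩, hone⟩
  · have := congrFun h v₀
    simp only [hone, Pi.zero_apply, one_ne_zero] at this
  · obtain ⟨B, hB, hKB⟩ := martinK_bounded hv₀ v
    exact ne_top_of_le_ne_top hB (kap_le hKB p)
  obtain ⟨hφ0, hφfin, hφh⟩ := hφ
  have hG := green_ne_top hv₀
  have hest : ∀ v N, v ∈ D N → v₀ ∈ D N →
      φ v ≤ kap s r F β v₀ v p * φ v₀ + spread s r F β v₀ (D N) v p ∧
      kap s r F β v₀ v p * φ v₀ ≤ φ v + spread s r F β v₀ (D N) v p := by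
    intro v N hv hv'
    have e1 : φ v = ∑' w, MartinK s r F β v₀ v w *
        (Green s r F β v₀ w * esc s r F β (D N) φ w) := by
      rw [harmonic_eq_potential (hDf N) hG hφfin hφh hv]
      exact tsum_congr fun w => by rw [← mul_assoc, martinK_mul hv₀]
    have e2 := harmonic_eq_potential (hDf N) hG hφfin hφh hv'
    have hesc : ∀ w, esc s r F β (D N) φ w ≤
        esc s r F β (D N) (fun u => kap s r F β v₀ u p) w := esc_mono (D N) hle
    constructor
    · rw [e1, e2, ← ENNReal.tsum_mul_left, spread, ← ENNReal.tsum_add]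
      refine ENNReal.tsum_le_tsum fun w => ?_
      calc MartinK s r F β v₀ v w * (Green s r F β v₀ w * esc s r F β (D N) φ w)
          ≤ (kap s r F β v₀ v p + ((MartinK s r F β v₀ v w - kap s r F β v₀ v p) +
              (kap s r F β v₀ v p - MartinK s r F β v₀ v w))) *
              (Green s r F β v₀ w * esc s r F β (D N) φ w) := by
            gcongr
            rw [← add_assoc]
            exact le_add_right le_add_tsub
        _ = kap s r F β v₀ v p * (Green s r F β v₀ w * esc s r F β (D N) φ w) +
            Green s r F β v₀ w * (esc s r F β (D N) φ w *
              ((MartinK s r F β v₀ v w - kap s r F β v₀ v p) +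
              (kap s r F β v₀ v p - MartinK s r F β v₀ v w))) := by ring
        _ ≤ _ := by
            gcongr
            exact hesc w
    · rw [e1, e2, ← ENNReal.tsum_mul_left, spread, ← ENNReal.tsum_add]
      refine ENNReal.tsum_le_tsum fun w => ?_
      calc kap s r F β v₀ v p * (Green s r F β v₀ w * esc s r F β (D N) φ w)
          ≤ (MartinK s r F β v₀ v w + ((MartinK s r F β v₀ v w - kap s r F β v₀ v p) +
              (kap s r F β v₀ v p - MartinK s r F β v₀ v w))) *
              (Green s r F β v₀ w * esc s r F β (D N) φ w) := by
            gcongr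
            rw [add_left_comm]
            exact le_add_left le_add_tsub
        _ = MartinK s r F β v₀ v w * (Green s r F β v₀ w * esc s r F β (D N) φ w) +
            Green s r F β v₀ w * (esc s r F β (D N) φ w *
              ((MartinK s r F β v₀ v w - kap s r F β v₀ v p) +
              (kap s r F β v₀ v p - MartinK s r F β v₀ v w))) := by ring
        _ ≤ _ := by
            gcongr
            exact hesc w
  have hprop : ∀ v, φ v = φ v₀ * kap s r F β v₀ v p := by
    intro v
    rw [mul_comm]
    have hex : ∀ ε : ℝ≥0, 0 < ε → ∃ N, v ∈ D N ∧ v₀ ∈ D N ∧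
        spread s r F β v₀ (D N) v p ≤ ε := by
      intro ε hε
      have hlt : liminf (fun N => spread s r F β v₀ (D N) v p) atTop < (ε : ℝ≥0∞) := by
        rw [hspread v]
        exact_mod_cast hε
      obtain ⟨N₁, h1⟩ := hDu v
      obtain ⟨N₂, h2⟩ := hDu v₀
      obtain ⟨N, hN, hN'⟩ := frequently_atTop.1
        (frequently_lt_of_liminf_lt (by isBoundedDefault) hlt) (max N₁ N₂)
      exact ⟨N, hDm ((le_max_left _ _).trans hN) h1, hDm ((le_max_right _ _).trans hN) h2,
        hN'.le⟩
    refine le_antisymm ?_ ?_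
    · refine ENNReal.le_of_forall_pos_le_add fun ε hε _ => ?_
      obtain ⟨N, h1, h2, h3⟩ := hex ε hε
      exact (hest v N h1 h2).1.trans (add_le_add_right h3 _)
    · refine ENNReal.le_of_forall_pos_le_add fun ε hε _ => ?_
      obtain ⟨N, h1, h2, h3⟩ := hex ε hε
      exact (hest v N h1 h2).2.trans (add_le_add_right h3 _)
  have hpos : φ v₀ ≠ 0 := by
    intro h0
    refine hφ0 (funext fun v => ?_)
    rw [hprop v, h0, zero_mul, Pi.zero_apply]
  refine ⟨(φ v₀).toNNReal, ENNReal.toNNReal_pos hpos (hφfin v₀), fun v => ?_⟩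
  rw [ENNReal.coe_toNNReal (hφfin v₀)]
  exact hprop v

end Spread

/-- every normalized `e^{βF}`-conformal measure is concentrated on `X_β`, the
set of paths along which the Martin kernels converge to a normalized minimal harmonic
vector, and the limit of the integrals of the Martin kernels over `Z(v₀)` equals the
integral of the limit, which equals `m(Z(v))`. -/
theorem statement6 {V A : Type} [Countable V] [Countable A] (s r : A → V)
    (F : A → ℝ) (β : ℝ) (v₀ : V)
    (hv₀ : ∀ v : V, Green s r F β v₀ v ≠ 0 ∧ Green s r F β v₀ v ≠ ∞)
    (m : Measure (PathSpace s r)) (hm : Conformal s r F β m)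
    (hnorm : m (cylV s r v₀) = 1)
    (Xβ : Set (PathSpace s r))
    (hXβ : Xβ = {p : PathSpace s r | ∃ ψ : V → ℝ≥0∞,
      IsMinimalHarmonic (Amat s r F β) ψ ∧ ψ v₀ = 1 ∧
      ∀ v : V, Filter.Tendsto (fun k => MartinK s r F β v₀ v (s (p.seq k)))
        Filter.atTop (𝓝 (ψ v))}) :
    m (Xβᶜ) = 0 ∧
    ∀ v : V,
      Filter.Tendsto
        (fun k => ∫⁻ p in cylV s r v₀, MartinK s r F β v₀ v (s (p.seq k)) ∂m)
        Filter.atTop (𝓝 (m (cylV s r v))) ∧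
      ∀ g : PathSpace s r → ℝ≥0∞,
        (∀ p ∈ Xβ, Filter.Tendsto (fun k => MartinK s r F β v₀ v (s (p.seq k)))
          Filter.atTop (𝓝 (g p))) →
        (∫⁻ p in cylV s r v₀, g p ∂m) = m (cylV s r v) := by
  subst hXβ
  obtain ⟨D, hDf, hDm, hDu⟩ := exists_exhaustion V
  have hconv := ae_tendsto_kap hv₀ hm
  have hX : ∀ᵐ p ∂m, p ∈ {p : PathSpace s r | ∃ ψ : V → ℝ≥0∞,
      IsMinimalHarmonic (Amat s r F β) ψ ∧ ψ v₀ = 1 ∧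
      ∀ v : V, Filter.Tendsto (fun k => MartinK s r F β v₀ v (s (p.seq k)))
        Filter.atTop (𝓝 (ψ v))} := by
    filter_upwards [hconv, ae_kap_harmonic hv₀ hm, ae_liminf_spread hv₀ hm hDf hDm hDu]
      with p h1 h2 h3
    obtain ⟨h4, h5⟩ := kap_minimal hv₀ hDf hDm hDu h2 h3
    exact ⟨fun v => kap s r F β v₀ v p, h4, h5, h1⟩
  refine ⟨mem_ae_iff.1 hX, fun v => ?_⟩
  have hkap : ∫⁻ p in cylV s r v₀, kap s r F β v₀ v p ∂m = m (cylV s r v) := by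
    have h1 := lintegral_mul_kap hv₀ hm (h := 1) measurable_one (fun _ => rfl)
      ENNReal.one_ne_top (fun _ => le_rfl) v
    simpa only [Pi.one_apply, mul_one, lintegral_one, Measure.restrict_apply_univ] using h1
  obtain ⟨B, hB, hKB⟩ := martinK_bounded hv₀ v
  refine ⟨?_, fun g hg => ?_⟩
  · rw [← hkap]
    refine tendsto_lintegral_of_dominated_convergence (fun _ => B)
      (fun k => measurable_seq (fun a => MartinK s r F β v₀ v (s a)) k)
      (fun k => ae_of_all _ fun p => hKB _) ?_ ?_
    · rw [setLIntegral_const, hnorm, mul_one]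
      exact hB
    · filter_upwards [ae_restrict_of_ae hconv] with p hp
      exact hp v
  · rw [← hkap]
    refine lintegral_congr_ae ?_
    filter_upwards [ae_restrict_of_ae hconv, ae_restrict_of_ae hX] with p hp hpX
    exact tendsto_nhds_unique (hg p hpX) (hp v)

end GraphKMS
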